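/- Let k be an algebraically closed field of characteristic 3, let d ≥ 2, let A = k[[x_0,…,x_d]] be the formal power series ring with maximal ideal 𝔪 (the ideal generated by the variables), and let F ∈ 𝔪² with F ≠ 0 (so A/(F) is a non-regular hypersurface ring of dimension d). Then either there is a ring isomorphism A/(F) ≅ A/(x_0² + x_1² + ⋯ + x_d²), or the liminf as e → ∞ of the real sequence e ↦ dim_k( A/((F) + (x_0^{3^e},…,x_d^{3^e})) ) / 3^{d·e} is at least 1 + (2/3)^{d−1}. (Here 1 + (2/3)^{d−1} = e_HK(S_{3,d}), the Hilbert–Kunz multiplicity of the A_2 singularity in characteristic 3, which strictly exceeds e_HK(R_{3,d}).) -/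

import Mathlib

open MvPowerSeries

/-- The Hilbert–Kunz function of the hypersurface `A/(F)`, where
`A = k[[x_0,…,x_d]]`, in characteristic `p`, at level `e`:
`dim_k A/((F) + (x_0^{p^e},…,x_d^{p^e}))`. -/
noncomputable def HKps (k : Type*) [Field k] (d p e : ℕ)
    (F : MvPowerSeries (Fin (d + 1)) k) : ℕ :=
  Module.finrank k
    (MvPowerSeries (Fin (d + 1)) k ⧸
      Ideal.span
        ({F} ∪ Set.range
          (fun i : Fin (d + 1) => (X i : MvPowerSeries (Fin (d + 1)) k) ^ p ^ e)))

namespace HKA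

variable {k : Type*} [Field k] {n : ℕ}

/-- the ideal generated by the variables -/
noncomputable def mI (k : Type*) [Field k] (n : ℕ) : Ideal (MvPowerSeries (Fin n) k) :=
  Ideal.span (Set.range (X : Fin n → MvPowerSeries (Fin n) k))

/-- the ideal generated by the `q`-th powers of the variables -/
noncomputable def bI (k : Type*) [Field k] (n q : ℕ) : Ideal (MvPowerSeries (Fin n) k) :=
  Ideal.span (Set.range (fun i : Fin n => (X i : MvPowerSeries (Fin n) k) ^ q))

lemma split (q : ℕ) (f : MvPowerSeries (Fin n) k)
    (hf : ∀ m : Fin n →₀ ℕ, (∀ i, m i < q) → coeff m f = 0) :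
    ∃ g : Fin n → MvPowerSeries (Fin n) k, f = ∑ i, X i ^ q * g i ∧
      ∀ i b, coeff b (g i) = 0 ∨ coeff b (g i) = coeff (b + Finsupp.single i q) f := by
  classical
  let P : Fin n → (Fin n →₀ ℕ) → Prop := fun i m => q ≤ m i ∧ ∀ j < i, m j < q
  let g : Fin n → MvPowerSeries (Fin n) k := fun i b =>
    if P i (b + Finsupp.single i q) then coeff (b + Finsupp.single i q) f else 0
  have hg : ∀ i b, coeff b (g i) =
      if P i (b + Finsupp.single i q) then coeff (b + Finsupp.single i q) f else 0 :=
    fun i b => rfl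
  refine ⟨g, ?_, fun i b => ?_⟩
  · ext m
    have h1 : ∀ i, coeff m (X i ^ q * g i) = if P i m then coeff m f else 0 := by
      intro i
      rw [X_pow_eq, coeff_monomial_mul]
      by_cases h : q ≤ m i
      · have h' : Finsupp.single i q ≤ m := by
          rw [Finsupp.single_le_iff]; exact h
        rw [if_pos h', one_mul, hg, tsub_add_cancel_of_le h']
      · have h' : ¬ Finsupp.single i q ≤ m := by
          rw [Finsupp.single_le_iff]; exact h
        rw [if_neg h', if_neg]
        exact fun hp => h hp.1
    rw [map_sum]
    simp_rw [h1]
    by_cases hm : ∀ i, m i < q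
    · rw [hf m hm]; simp
    · push Not at hm
      let S := Finset.univ.filter (fun i => q ≤ m i)
      have hS : S.Nonempty := by
        obtain ⟨i, hi⟩ := hm
        exact ⟨i, by simp [S, hi]⟩
      let i0 := S.min' hS
      have hi0 : q ≤ m i0 := by
        have := S.min'_mem hS
        simpa [S] using this
      have hlt : ∀ j < i0, m j < q := by
        intro j hj
        by_contra hc
        have : j ∈ S := by simp [S]; omega
        exact absurd (S.min'_le j this) (not_le.mpr hj)
      rw [Finset.sum_eq_single i0]
      · rw [if_pos ⟨hi0, hlt⟩]
      · intro j _ hj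
        rw [if_neg]
        rintro ⟨h2, h3⟩
        rcases lt_or_gt_of_ne hj with h4 | h4
        · exact absurd (hlt j h4) (by omega)
        · exact absurd (h3 i0 h4) (by omega)
      · simp
  · rw [hg]; split_ifs <;> simp

lemma mem_bI {q : ℕ} {f : MvPowerSeries (Fin n) k} :
    f ∈ bI k n q ↔ ∀ m : Fin n →₀ ℕ, (∀ i, m i < q) → coeff m f = 0 := by
  classical
  constructor
  · intro h m hm
    unfold bI at h
    induction h using Submodule.span_induction with
    | mem x hx =>
      obtain ⟨i, rfl⟩ := hx
      simp only [coeff_X_pow]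
      rw [if_neg]
      rintro rfl
      have := hm i
      simp at this
    | zero => simp
    | add x y _ _ h1 h2 => simp [h1, h2]
    | smul a x hx h =>
      rw [smul_eq_mul, coeff_mul]
      clear h
      -- redo: use divisibility
      revert a
      intro a
      have hx' : a * x ∈ Ideal.span (Set.range (fun i : Fin n => (X i : MvPowerSeries (Fin n) k) ^ q)) :=
        Ideal.mul_mem_left _ _ hx
      rw [Ideal.mem_span_range_iff_exists_fun] at hx'
      obtain ⟨c, hc⟩ := hx'
      rw [← coeff_mul, ← hc, map_sum]
      refine Finset.sum_eq_zero fun i _ => ?_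
      rw [X_pow_eq, coeff_mul_monomial, if_neg]
      rw [Finsupp.single_le_iff]
      have := hm i
      omega
  · intro h
    obtain ⟨g, hg, -⟩ := split q f h
    rw [hg]
    refine Ideal.sum_mem _ fun i _ => Ideal.mul_mem_right _ _ (Ideal.subset_span ⟨i, rfl⟩)

lemma mI_eq : mI k n = bI k n 1 := by simp [mI, bI]

lemma mem_mI {f : MvPowerSeries (Fin n) k} : f ∈ mI k n ↔ constantCoeff f = 0 := by
  rw [mI_eq, mem_bI]
  constructor
  · intro h; exact h 0 (by simp)
  · intro h m hm
    have : m = 0 := by ext i; have := hm i; simp; omega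
    rw [this]; exact h

lemma mem_mI_pow (N : ℕ) (f : MvPowerSeries (Fin n) k)
    (h : ∀ m : Fin n →₀ ℕ, m.degree < N → coeff m f = 0) : f ∈ mI k n ^ N := by
  induction N generalizing f with
  | zero => simp
  | succ N ih =>
    obtain ⟨g, hg, hg2⟩ := split 1 f (fun m hm => h m (by
      have : m = 0 := by ext i; have := hm i; simp; omega
      simp [this]))
    rw [hg]
    refine Ideal.sum_mem _ fun i _ => ?_
    rw [pow_succ, mul_comm (X i ^ 1)]
    refine Ideal.mul_mem_mul (ih _ fun m hm => ?_) ?_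
    · rcases hg2 i m with h1 | h1
      · exact h1
      · rw [h1]; apply h; simp; omega
    · rw [pow_one]; exact Ideal.subset_span ⟨i, rfl⟩

lemma coeff_of_mem_mI_pow (N : ℕ) (f : MvPowerSeries (Fin n) k) (h : f ∈ mI k n ^ N)
    (m : Fin n →₀ ℕ) (hm : m.degree < N) : coeff m f = 0 := by
  classical
  induction N generalizing f m with
  | zero => simp at hm
  | succ N ih =>
    rw [pow_succ] at h
    refine Submodule.mul_induction_on h (fun a ha b hb => ?_) (fun x y hx hy => by simp [hx, hy])
    rw [coeff_mul]
    refine Finset.sum_eq_zero fun p hp => ?_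
    replace hp : p.1 + p.2 = m := Finset.HasAntidiagonal.mem_antidiagonal.mp hp
    by_cases h2 : p.2 = 0
    · rw [h2, coeff_zero_eq_constantCoeff_apply, mem_mI.mp hb, mul_zero]
    · rw [ih a ha p.1, zero_mul]
      have : p.2.degree ≠ 0 := by rwa [Ne, Finsupp.degree_eq_zero_iff]
      rw [← hp] at hm
      simp at hm
      omega

instance : IsAdicComplete (mI k n) (MvPowerSeries (Fin n) k) where
  haus' := by
    intro x hx
    ext m
    have := hx (m.degree + 1)
    rw [SModEq.zero] at this
    simp at this
    rw [coeff_of_mem_mI_pow _ _ this m (by omega)]; simp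
  prec' := by
    intro f hf
    let L : MvPowerSeries (Fin n) k := fun m => coeff m (f (m.degree + 1))
    have hL : ∀ m, coeff m L = coeff m (f (m.degree + 1)) := fun m => rfl
    refine ⟨L, fun N => ?_⟩
    rw [SModEq.sub_mem]
    simp only [smul_eq_mul, Ideal.mul_top]
    refine mem_mI_pow _ _ fun m hm => ?_
    have := hf (show m.degree + 1 ≤ N by omega)
    rw [SModEq.sub_mem] at this
    simp only [smul_eq_mul, Ideal.mul_top] at this
    have := coeff_of_mem_mI_pow _ _ this m (by omega)
    rw [map_sub, sub_eq_zero] at this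
    rw [map_sub, ← this, hL, sub_self]

lemma inj_of_surj {R : Type*} [CommRing R] [IsNoetherianRing R] (φ : R →+* R)
    (hs : Function.Surjective φ) : Function.Injective φ := by
  have hpow : ∀ N : ℕ, Function.Surjective (φ ^ N : R →+* R) := by
    intro N
    induction N with
    | zero => exact fun x => ⟨x, rfl⟩
    | succ N ih =>
      rw [pow_succ]; exact ih.comp hs
  have hmono : Monotone (fun N : ℕ => RingHom.ker (φ ^ N : R →+* R)) := by
    refine monotone_nat_of_le_succ fun N x hx => ?_
    rw [RingHom.mem_ker] at hx ⊢
    rw [pow_succ']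
    change φ ((φ ^ N) x) = 0
    rw [hx, map_zero]
  obtain ⟨N, hN⟩ := monotone_stabilizes_iff_noetherian.mpr
    (inferInstance : IsNoetherian R R) ⟨_, hmono⟩
  rw [injective_iff_map_eq_zero]
  intro x hx
  obtain ⟨z, rfl⟩ := hpow N x
  have h1 : z ∈ RingHom.ker (φ ^ (N + 1)) := by
    rw [RingHom.mem_ker, pow_succ']; exact hx
  have h2 := hN (N + 1) (by omega)
  change RingHom.ker (φ ^ N) = RingHom.ker (φ ^ (N + 1)) at h2
  rw [← h2] at h1
  exact h1

lemma exists_auto (y : Fin n → MvPowerSeries (Fin n) k)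
    (hy : Ideal.span (Set.range y) = mI k n) :
    ∃ φ : MvPowerSeries (Fin n) k ≃ₐ[k] MvPowerSeries (Fin n) k, ∀ i, φ (X i) = y i := by
  have h0 : ∀ i, constantCoeff (y i) = 0 := fun i => by
    rw [← mem_mI, ← hy]; exact Ideal.subset_span ⟨i, rfl⟩
  have hs : HasSubst y := hasSubst_of_constantCoeff_zero h0
  let φ := substAlgHom (R := k) hs
  have hX : ∀ i, φ (X i) = y i := fun i => substAlgHom_X hs i
  have hmap : (mI k n).map (φ : MvPowerSeries (Fin n) k →+* MvPowerSeries (Fin n) k) = mI k n := by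
    conv_lhs => rw [mI, Ideal.map_span, ← Set.range_comp]
    rw [← hy]; congr 2
    ext1 i; exact hX i
  have hsurj : Function.Surjective (φ : MvPowerSeries (Fin n) k →+* MvPowerSeries (Fin n) k) := by
    have : IsHausdorff ((mI k n).map (φ : MvPowerSeries (Fin n) k →+* MvPowerSeries (Fin n) k))
        (MvPowerSeries (Fin n) k) := by rw [hmap]; infer_instance
    refine surjective_of_mk_map_comp_surjective (I := mI k n) _ ?_
    intro z
    obtain ⟨z, rfl⟩ := Ideal.Quotient.mk_surjective z
    refine ⟨C (constantCoeff z), ?_⟩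
    rw [RingHom.comp_apply, Ideal.Quotient.eq, hmap, mem_mI]
    have : φ (C (constantCoeff z)) = C (constantCoeff z) := φ.commutes (constantCoeff z)
    simp [this]
  have hinj := inj_of_surj _ hsurj
  refine ⟨AlgEquiv.ofBijective φ ⟨hinj, hsurj⟩, fun i => hX i⟩

end HKA

namespace HKA

variable {k : Type*} [Field k] {n : ℕ}

lemma exists_sqrt [IsAlgClosed k] [CharP k 3] (f : MvPowerSeries (Fin n) k)
    (hf : constantCoeff f ≠ 0) : ∃ s : MvPowerSeries (Fin n) k, s ^ 2 = f := by
  obtain ⟨r, hr⟩ := IsAlgClosed.exists_pow_nat_eq (constantCoeff f) (show 0 < 2 by norm_num)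
  have hr0 : r ≠ 0 := by rintro rfl; apply hf; rw [← hr]; simp
  have h2 : (2 : k) ≠ 0 := by
    intro h
    have : ((2 : ℕ) : k) = 0 := by exact_mod_cast h
    rw [CharP.cast_eq_zero_iff k 3] at this
    omega
  have := HenselianRing.is_henselian (I := mI k n) (Polynomial.X ^ 2 - Polynomial.C f)
    (Polynomial.monic_X_pow_sub_C _ (by norm_num)) (C r) (by
      rw [mem_mI]; simp [hr]) (by
      have : IsUnit (2 * C r : MvPowerSeries (Fin n) k) := by
        rw [isUnit_iff_constantCoeff, map_mul, map_ofNat]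
        simp [h2, hr0]
      have h3 := this.map (Ideal.Quotient.mk (mI k n))
      convert h3 using 1
      simp [Polynomial.derivative_sub, one_add_one_eq_two])
  obtain ⟨s, hs, -⟩ := this
  refine ⟨s, ?_⟩
  simpa [Polynomial.IsRoot, sub_eq_zero] using hs

lemma cholesky [IsAlgClosed k] [CharP k 3] (N : ℕ) (a : Matrix (Fin N) (Fin N) (MvPowerSeries (Fin n) k))
    (hs : ∀ i j, a i j = a j i)
    (h1 : ∀ i j, constantCoeff (a i j) = if i = j then 1 else 0) :
    ∃ P : Matrix (Fin N) (Fin N) (MvPowerSeries (Fin n) k), P.transpose * P = a := by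
  induction N with
  | zero => exact ⟨0, by ext i; exact i.elim0⟩
  | succ N ih =>
    obtain ⟨s, hs2⟩ := exists_sqrt (a 0 0) (by simp [h1])
    have hu : IsUnit s := by
      have : IsUnit (s ^ 2) := by rw [hs2, isUnit_iff_constantCoeff]; simp [h1]
      exact (isUnit_pow_iff (by norm_num)).mp this
    obtain ⟨t, ht⟩ := hu.exists_right_inv
    obtain ⟨P, hP⟩ := ih (Matrix.of fun i j => a i.succ j.succ - (t * a 0 i.succ) * (t * a 0 j.succ))
      (fun i j => by simp only [Matrix.of_apply]; rw [hs]; ring) (fun i j => by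
        have e1 : constantCoeff (a 0 i.succ) = 0 := by
          rw [h1, if_neg (Fin.succ_ne_zero i).symm]
        simp only [Matrix.of_apply, map_sub, map_mul, e1, h1]
        simp)
    refine ⟨Matrix.of fun i => Fin.cases (fun j => Fin.cases s (fun j => t * a 0 j.succ) j)
      (fun l j => Fin.cases 0 (fun j => P l j) j) i, ?_⟩
    refine Matrix.ext fun i j => ?_
    have hP' : ∀ i j, ∑ l, P l i * P l j =
        a i.succ j.succ - (t * a 0 i.succ) * (t * a 0 j.succ) := by
      intro i j
      have := congrFun (congrFun hP i) j
      simpa [Matrix.mul_apply] using this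
    rw [Matrix.mul_apply, Fin.sum_univ_succ]
    simp only [Matrix.transpose_apply, Matrix.of_apply]
    refine Fin.cases ?_ (fun i => ?_) i <;> refine Fin.cases ?_ (fun j => ?_) j
    · simp [← hs2, sq]
    · simp [← mul_assoc, ht]
    · simp only [Fin.cases_zero, Fin.cases_succ, mul_zero, Finset.sum_const_zero, add_zero]
      rw [hs i.succ 0, mul_comm, ← mul_assoc, ht, one_mul]
    · simp [hP']

lemma two_ne (k : Type*) [Field k] [CharP k 3] : (2 : k) ≠ 0 := by
  intro h
  have : ((2 : ℕ) : k) = 0 := by exact_mod_cast h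
  rw [CharP.cast_eq_zero_iff k 3] at this
  omega

lemma field_sq [IsAlgClosed k] [CharP k 3] (N : ℕ) (a : Matrix (Fin N) (Fin N) k)
    (hs : ∀ i j, a i j = a j i) (hd : a.det ≠ 0) :
    ∃ P : Matrix (Fin N) (Fin N) k, P.transpose * P = a := by
  have h2 := two_ne k
  let _ : Invertible (2 : k) := invertibleOfNonzero h2
  let B : LinearMap.BilinForm k (Fin N → k) := Matrix.toBilin' a
  let Q : QuadraticForm k (Fin N → k) := B.toQuadraticMap
  have hBs : ∀ x y, B x y = B y x := by
    intro x y
    simp only [B, Matrix.toBilin'_apply]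
    rw [Finset.sum_comm]
    refine Finset.sum_congr rfl fun i _ => Finset.sum_congr rfl fun j _ => ?_
    rw [hs]; ring
  have hass : QuadraticMap.associated Q = B := QuadraticMap.associated_left_inverse k hBs
  have hsep : (QuadraticMap.associated (R := k) Q).SeparatingLeft := by
    rw [hass]
    have := (Matrix.nondegenerate_toBilin'_iff (M := a)).mpr (Matrix.nondegenerate_of_det_ne_zero hd)
    exact this.1
  obtain ⟨e⟩ := Q.equivalent_weightedSumSquares_of_isAlgClosed hsep
  have hfr : Module.finrank k (Fin N → k) = N := by simp
  let c : Fin N ≃ Fin (Module.finrank k (Fin N → k)) := finCongr hfr.symm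
  have he : ∀ x, Q x = ∑ l, (e x (c l)) ^ 2 := by
    intro x
    rw [← e.map_app x, QuadraticMap.weightedSumSquares_apply, ← c.sum_comp]
    simp [sq]
  have hb : ∀ x y, B x y = ∑ l, e x (c l) * e y (c l) := by
    intro x y
    have h3 : 2 * B x y = Q (x + y) - Q x - Q y := by
      simp only [Q, LinearMap.BilinMap.toQuadraticMap_apply, map_add, LinearMap.add_apply]
      rw [hBs y x]; ring
    have h4 : 2 * B x y = 2 * ∑ l, e x (c l) * e y (c l) := by
      rw [h3, he, he, he, ← Finset.sum_sub_distrib, ← Finset.sum_sub_distrib, Finset.mul_sum]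
      refine Finset.sum_congr rfl fun l _ => ?_
      have : e (x + y) = e x + e y := map_add e.toLinearEquiv x y
      rw [this]; simp; ring
    exact mul_left_cancel₀ h2 h4
  refine ⟨Matrix.of fun l i => e (Pi.single i 1) (c l), ?_⟩
  ext i j
  rw [Matrix.mul_apply]
  simp only [Matrix.transpose_apply, Matrix.of_apply]
  rw [← hb]
  simp [B]

lemma mat_sq [IsAlgClosed k] [CharP k 3] (N : ℕ) (a : Matrix (Fin N) (Fin N) (MvPowerSeries (Fin n) k))
    (hs : ∀ i j, a i j = a j i) (hd : (a.map constantCoeff).det ≠ 0) :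
    ∃ P Pi : Matrix (Fin N) (Fin N) (MvPowerSeries (Fin n) k), P.transpose * P = a ∧
      Pi * P = 1 ∧ P * Pi = 1 := by
  obtain ⟨P0, hP0⟩ := field_sq N (a.map constantCoeff) (fun i j => by simp [hs i j]) hd
  have hP0u : IsUnit P0.det := by
    rw [← hP0, Matrix.det_mul] at hd
    exact isUnit_iff_ne_zero.mpr (right_ne_zero_of_mul hd)
  let R := (P0⁻¹).map (C : k →+* MvPowerSeries (Fin n) k)
  let S := P0.map (C : k →+* MvPowerSeries (Fin n) k)
  have hRS : R * S = 1 := by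
    simp only [R, S]
    rw [← Matrix.map_mul, Matrix.nonsing_inv_mul _ hP0u]
    simp
  let a' := R.transpose * a * R
  have hat : a.transpose = a := by ext i j; simp [hs i j]
  have ha't : a'.transpose = a' := by
    simp only [a', Matrix.transpose_mul, Matrix.transpose_transpose, hat, Matrix.mul_assoc]
  have hc : a'.map constantCoeff = 1 := by
    simp only [a', Matrix.map_mul]
    have : R.map constantCoeff = P0⁻¹ := by ext i j; simp [R]
    have this2 : R.transpose.map constantCoeff = P0⁻¹.transpose := by ext i j; simp [R]
    rw [this2, this, ← hP0, Matrix.mul_assoc, Matrix.mul_assoc,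
      Matrix.mul_nonsing_inv _ hP0u, Matrix.mul_one, ← Matrix.transpose_mul,
      Matrix.mul_nonsing_inv _ hP0u, Matrix.transpose_one]
  obtain ⟨P, hP⟩ := cholesky N a' (fun i j => by
      have := congrFun (congrFun ha't j) i
      simpa using this) (fun i j => by
      have := congrFun (congrFun hc i) j
      simpa [Matrix.one_apply] using this)
  have hPS : (P * S).transpose * (P * S) = a := by
    rw [Matrix.transpose_mul, Matrix.mul_assoc, ← Matrix.mul_assoc P.transpose, hP]
    simp only [a', Matrix.mul_assoc]
    rw [hRS, Matrix.mul_one, ← Matrix.mul_assoc, ← Matrix.transpose_mul, hRS, Matrix.transpose_one,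
      Matrix.one_mul]
  have hu : IsUnit (P * S).det := by
    have h1 : IsUnit a.det := by
      rw [isUnit_iff_constantCoeff]
      have : constantCoeff a.det = (a.map constantCoeff).det :=
        RingHom.map_det constantCoeff a
      rw [this]; exact isUnit_iff_ne_zero.mpr hd
    rw [← hPS, Matrix.det_mul] at h1
    exact isUnit_of_mul_isUnit_right h1
  exact ⟨P * S, (P * S)⁻¹, hPS, Matrix.nonsing_inv_mul _ hu, Matrix.mul_nonsing_inv _ hu⟩

end HKA

namespace HKA

variable {k : Type*} [Field k] {n : ℕ}

/-- coefficients in the box -/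
noncomputable def cf (k : Type*) [Field k] (n q : ℕ) :
    MvPowerSeries (Fin n) k →ₗ[k] ((Fin n → Fin q) → k) :=
  LinearMap.pi fun m => coeff (Finsupp.equivFunOnFinite.symm (fun i => (m i : ℕ)))

lemma cf_apply (q : ℕ) (f : MvPowerSeries (Fin n) k) (m : Fin n → Fin q) :
    cf k n q f m = coeff (Finsupp.equivFunOnFinite.symm (fun i => (m i : ℕ))) f := rfl

lemma cf_ker (q : ℕ) : LinearMap.ker (cf k n q) = (bI k n q).restrictScalars k := by
  ext f
  rw [LinearMap.mem_ker, Submodule.restrictScalars_mem, mem_bI]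
  constructor
  · intro h m hm
    have := congrFun h (fun i => ⟨m i, hm i⟩)
    rw [cf_apply] at this
    rw [Pi.zero_apply] at this
    convert this using 2
    congr 1
    ext i
    simp
  · intro h
    funext m
    rw [cf_apply]
    exact h _ (fun i => by simp)

lemma cf_surj (q : ℕ) : Function.Surjective (cf k n q) := by
  intro g
  let f : MvPowerSeries (Fin n) k := fun m =>
    if h : ∀ i, m i < q then g (fun i => ⟨m i, h i⟩) else 0
  refine ⟨f, ?_⟩
  funext m
  rw [cf_apply]
  change (if h : _ then _ else _) = _
  rw [dif_pos (fun i => by simp)]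
  rfl

noncomputable def boxEquiv (k : Type*) [Field k] (n q : ℕ) :
    (MvPowerSeries (Fin n) k ⧸ bI k n q) ≃ₗ[k] ((Fin n → Fin q) → k) :=
  (Submodule.Quotient.restrictScalarsEquiv k (bI k n q)).symm ≪≫ₗ
    (Submodule.quotEquivOfEq _ _ (cf_ker q).symm) ≪≫ₗ
    (cf k n q).quotKerEquivOfSurjective (cf_surj q)

instance finV (q : ℕ) : Module.Finite k (MvPowerSeries (Fin n) k ⧸ bI k n q) :=
  Module.Finite.equiv (boxEquiv k n q).symm

lemma finrankV (q : ℕ) : Module.finrank k (MvPowerSeries (Fin n) k ⧸ bI k n q) = q ^ n := by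
  rw [(boxEquiv k n q).finrank_eq]
  simp

/-- Hilbert-Kunz numbers -/
noncomputable def hk (q : ℕ) (F : MvPowerSeries (Fin n) k) : ℕ :=
  Module.finrank k (MvPowerSeries (Fin n) k ⧸ (Ideal.span {F} ⊔ bI k n q))

lemma HKps_eq (d e : ℕ) (F : MvPowerSeries (Fin (d + 1)) k) : HKps k d 3 e F = hk (3 ^ e) F := by
  unfold HKps hk bI
  rw [Ideal.span_union]

/-- multiplication by `F` on the truncated algebra -/
noncomputable def T (q : ℕ) (F : MvPowerSeries (Fin n) k) :
    (MvPowerSeries (Fin n) k ⧸ bI k n q) →ₗ[k] (MvPowerSeries (Fin n) k ⧸ bI k n q) :=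
  LinearMap.mulLeft k (Ideal.Quotient.mk (bI k n q) F)

lemma T_mk (q : ℕ) (F f : MvPowerSeries (Fin n) k) :
    T q F (Ideal.Quotient.mk (bI k n q) f) = Ideal.Quotient.mk (bI k n q) (F * f) := by
  simp [T]

lemma mem_span_sup (I : Ideal (MvPowerSeries (Fin n) k)) (F f : MvPowerSeries (Fin n) k) :
    f ∈ Ideal.span {F} ⊔ I ↔ ∃ g, f - F * g ∈ I := by
  rw [Submodule.mem_sup]
  constructor
  · rintro ⟨y, hy, z, hz, rfl⟩
    obtain ⟨g, rfl⟩ := Ideal.mem_span_singleton'.mp hy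
    exact ⟨g, by convert hz using 1; ring⟩
  · rintro ⟨g, hg⟩
    exact ⟨F * g, Ideal.mem_span_singleton'.mpr ⟨g, mul_comm _ _⟩, _, hg, by ring⟩

noncomputable def toCoker (q : ℕ) (F : MvPowerSeries (Fin n) k) :
    MvPowerSeries (Fin n) k →ₗ[k]
      ((MvPowerSeries (Fin n) k ⧸ bI k n q) ⧸ LinearMap.range (T q F)) :=
  (LinearMap.range (T q F)).mkQ ∘ₗ (Ideal.Quotient.mkₐ k (bI k n q)).toLinearMap

lemma toCoker_surj (q : ℕ) (F : MvPowerSeries (Fin n) k) : Function.Surjective (toCoker q F) :=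
  (Submodule.mkQ_surjective _).comp (Ideal.Quotient.mkₐ_surjective k _)

lemma toCoker_ker (q : ℕ) (F : MvPowerSeries (Fin n) k) :
    LinearMap.ker (toCoker q F) = (Ideal.span {F} ⊔ bI k n q).restrictScalars k := by
  ext f
  rw [Submodule.restrictScalars_mem, mem_span_sup, LinearMap.mem_ker]
  simp only [toCoker, LinearMap.comp_apply, Submodule.mkQ_apply, Submodule.Quotient.mk_eq_zero,
    LinearMap.mem_range, AlgHom.toLinearMap_apply, Ideal.Quotient.mkₐ_eq_mk]
  constructor
  · rintro ⟨y, hy⟩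
    obtain ⟨g, rfl⟩ := Ideal.Quotient.mk_surjective y
    rw [T_mk] at hy
    exact ⟨g, (Ideal.Quotient.mk_eq_mk_iff_sub_mem _ _).mp hy.symm⟩
  · rintro ⟨g, hg⟩
    refine ⟨Ideal.Quotient.mk _ g, ?_⟩
    rw [T_mk]
    exact ((Ideal.Quotient.mk_eq_mk_iff_sub_mem _ _).mpr hg).symm

noncomputable def cokerEquiv (q : ℕ) (F : MvPowerSeries (Fin n) k) :
    (MvPowerSeries (Fin n) k ⧸ (Ideal.span {F} ⊔ bI k n q)) ≃ₗ[k]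
      ((MvPowerSeries (Fin n) k ⧸ bI k n q) ⧸ LinearMap.range (T q F)) :=
  (Submodule.Quotient.restrictScalarsEquiv k (Ideal.span {F} ⊔ bI k n q)).symm ≪≫ₗ
    (Submodule.quotEquivOfEq _ _ (toCoker_ker q F).symm) ≪≫ₗ
    (toCoker q F).quotKerEquivOfSurjective (toCoker_surj q F)

instance finH (q : ℕ) (F : MvPowerSeries (Fin n) k) :
    Module.Finite k (MvPowerSeries (Fin n) k ⧸ (Ideal.span {F} ⊔ bI k n q)) :=
  Module.Finite.equiv (cokerEquiv q F).symm

lemma hk_add (q : ℕ) (F : MvPowerSeries (Fin n) k) :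
    hk q F + Module.finrank k (LinearMap.range (T q F)) = q ^ n := by
  unfold hk
  rw [(cokerEquiv q F).finrank_eq, Submodule.finrank_quotient_add_finrank, finrankV]

lemma hk_ker (q : ℕ) (F : MvPowerSeries (Fin n) k) :
    hk q F = Module.finrank k (LinearMap.ker (T q F)) := by
  have h1 := hk_add q F
  have h2 := LinearMap.finrank_range_add_finrank_ker (T q F)
  rw [finrankV] at h2
  omega

lemma le_hk (q : ℕ) (F : MvPowerSeries (Fin n) k) {W : Type*} [AddCommGroup W] [Module k W]
    (L : MvPowerSeries (Fin n) k →ₗ[k] W) (hL : Function.Surjective L)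
    (h1 : ∀ f, L (F * f) = 0) (h2 : ∀ f ∈ bI k n q, L f = 0) :
    Module.finrank k W ≤ hk q F := by
  let L' : (MvPowerSeries (Fin n) k ⧸ (Ideal.span {F} ⊔ bI k n q).restrictScalars k) →ₗ[k] W :=
    Submodule.liftQ _ L (by
      intro f hf
      obtain ⟨g, hg⟩ := (mem_span_sup _ _ _).mp hf
      rw [LinearMap.mem_ker]
      have := h2 _ hg
      rw [map_sub, h1, sub_zero] at this
      exact this)
  let L'' := L' ∘ₗ (Submodule.Quotient.restrictScalarsEquiv k
    (Ideal.span {F} ⊔ bI k n q)).symm.toLinearMap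
  refine LinearMap.finrank_le_finrank_of_surjective (f := L'') ?_
  intro w
  obtain ⟨f, rfl⟩ := hL w
  exact ⟨Ideal.Quotient.mk _ f, rfl⟩

lemma hk_congr (q : ℕ) (F G : MvPowerSeries (Fin n) k) (h : F - G ∈ bI k n q) :
    hk q F = hk q G := by
  have : T q F = T q G := by
    unfold T
    rw [(Ideal.Quotient.mk_eq_mk_iff_sub_mem _ _).mpr h]
  rw [hk_ker, hk_ker, this]

instance charA [CharP k 3] : CharP (MvPowerSeries (Fin n) k) 3 :=
  charP_of_injective_algebraMap (algebraMap k (MvPowerSeries (Fin n) k)).injective 3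

lemma cube_mem [CharP k 3] (f : MvPowerSeries (Fin n) k) (hf : f ∈ mI k n) : f ^ 3 ∈ bI k n 3 := by
  obtain ⟨g, rfl⟩ := Ideal.mem_span_range_iff_exists_fun.mp hf
  rw [sum_pow_char 3]
  refine Ideal.sum_mem _ fun i _ => ?_
  rw [mul_pow]
  exact Ideal.mul_mem_left _ _ (Ideal.subset_span ⟨i, rfl⟩)

lemma bI_auto [CharP k 3] (φ : MvPowerSeries (Fin n) k ≃ₐ[k] MvPowerSeries (Fin n) k) :
    ∀ f ∈ bI k n 3, φ f ∈ bI k n 3 := by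
  intro f hf
  obtain ⟨g, rfl⟩ := Ideal.mem_span_range_iff_exists_fun.mp hf
  rw [map_sum]
  refine Ideal.sum_mem _ fun i _ => ?_
  rw [map_mul, map_pow]
  refine Ideal.mul_mem_left _ _ (cube_mem _ ?_)
  rw [mem_mI]
  by_contra h
  have h1 : IsUnit (φ (X i)) := isUnit_iff_constantCoeff.mpr (isUnit_iff_ne_zero.mpr h)
  have h2 : IsUnit (X i : MvPowerSeries (Fin n) k) := by
    have := h1.map φ.symm
    simpa using this
  rw [isUnit_iff_constantCoeff] at h2
  simp at h2

lemma hk_auto [CharP k 3] (φ : MvPowerSeries (Fin n) k ≃ₐ[k] MvPowerSeries (Fin n) k)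
    (F : MvPowerSeries (Fin n) k) :
    hk 3 F ≤ hk 3 (φ F) := by
  refine le_hk 3 (φ F) ((Ideal.Quotient.mkₐ k (Ideal.span {F} ⊔ bI k n 3)).toLinearMap ∘ₗ
    φ.symm.toLinearMap) ?_ ?_ ?_
  · exact (Ideal.Quotient.mkₐ_surjective k _).comp φ.symm.surjective
  · intro f
    simp only [LinearMap.comp_apply, AlgEquiv.toLinearMap_apply, AlgHom.toLinearMap_apply,
      Ideal.Quotient.mkₐ_eq_mk, map_mul, AlgEquiv.symm_apply_apply]
    rw [← map_mul, Ideal.Quotient.eq_zero_iff_mem]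
    exact Ideal.mul_mem_right _ _ (Ideal.mem_sup_left (Ideal.mem_span_singleton_self F))
  · intro f hf
    simp only [LinearMap.comp_apply, AlgEquiv.toLinearMap_apply, AlgHom.toLinearMap_apply,
      Ideal.Quotient.mkₐ_eq_mk]
    rw [Ideal.Quotient.eq_zero_iff_mem]
    exact Ideal.mem_sup_right (bI_auto φ.symm f hf)

end HKA

namespace HKA

variable {k : Type*} [Field k] {n : ℕ}

lemma finrank_ker_comp_le {V : Type*} [AddCommGroup V] [Module k V] [Module.Finite k V]
    (S T : V →ₗ[k] V) : Module.finrank k (LinearMap.ker (S ∘ₗ T)) ≤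
      Module.finrank k (LinearMap.ker S) + Module.finrank k (LinearMap.ker T) := by
  let T' := T.domRestrict (LinearMap.ker (S ∘ₗ T))
  have h := LinearMap.finrank_range_add_finrank_ker T'
  have h1 : Module.finrank k (LinearMap.range T') ≤ Module.finrank k (LinearMap.ker S) := by
    refine Submodule.finrank_mono ?_
    rintro _ ⟨x, rfl⟩
    exact x.2
  have h2 : Module.finrank k (LinearMap.ker T') ≤ Module.finrank k (LinearMap.ker T) := by
    refine LinearMap.finrank_le_finrank_of_injective
      (f := ((LinearMap.ker (S ∘ₗ T)).subtype ∘ₗ (LinearMap.ker T').subtype).codRestrict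
        (LinearMap.ker T) (fun x => ?_)) ?_
    · have := x.2
      exact this
    · intro x y hxy
      have := congrArg Subtype.val hxy
      exact Subtype.ext (Subtype.ext this)
  omega

lemma hk_cube (q : ℕ) (F : MvPowerSeries (Fin n) k) : hk q (F ^ 3) ≤ 3 * hk q F := by
  have : T q (F ^ 3) = T q F ∘ₗ (T q F ∘ₗ T q F) := by
    refine LinearMap.ext fun x => ?_
    obtain ⟨g, rfl⟩ := Ideal.Quotient.mk_surjective x
    rw [LinearMap.comp_apply, LinearMap.comp_apply, T_mk, T_mk, T_mk, T_mk]
    congr 1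
    ring
  rw [hk_ker, hk_ker, this]
  have h1 := finrank_ker_comp_le (T q F) (T q F ∘ₗ T q F)
  have h2 := finrank_ker_comp_le (T q F) (T q F)
  omega

/-- the exponent attached to a residue -/
noncomputable def ex (α : Fin n → Fin 3) : Fin n →₀ ℕ :=
  Finsupp.equivFunOnFinite.symm (fun i => (α i : ℕ))

lemma ex_apply (α : Fin n → Fin 3) (i : Fin n) : ex α i = (α i : ℕ) := rfl

/-- Frobenius components -/
noncomputable def pr (α : Fin n → Fin 3) : MvPowerSeries (Fin n) k →ₗ[k] MvPowerSeries (Fin n) k where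
  toFun f := fun m => coeff (3 • m + ex α) f
  map_add' f g := by
    funext m
    exact map_add (coeff (3 • m + ex α)) f g
  map_smul' r f := by
    funext m
    exact map_smul (coeff (3 • m + ex α)) r f

lemma coeff_pr (α : Fin n → Fin 3) (f : MvPowerSeries (Fin n) k) (m) :
    coeff m (pr α f) = coeff (3 • m + ex α) f := rfl

lemma pr_expand (α : Fin n → Fin 3) (h f : MvPowerSeries (Fin n) k) :
    pr α (expand 3 (by norm_num) h * f) = h * pr α f := by
  classical
  ext m
  rw [coeff_pr, coeff_mul, coeff_mul]
  symm
  refine Finset.sum_of_injOn (fun p => (3 • p.1, 3 • p.2 + ex α)) ?_ ?_ ?_ ?_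
  · rintro ⟨a, b⟩ - ⟨c, d⟩ - hh
    simp only [Prod.mk.injEq, add_left_inj] at hh
    have e1 : a = c := by
      ext i; have := DFunLike.congr_fun hh.1 i; simp at this; exact this
    have e2 : b = d := by
      ext i; have := DFunLike.congr_fun hh.2 i; simp at this; exact this
    rw [e1, e2]
  · rintro ⟨a, b⟩ hp
    simp only [Finset.mem_coe, Finset.HasAntidiagonal.mem_antidiagonal] at hp ⊢
    rw [← hp, smul_add, add_assoc]
  · rintro ⟨a, b⟩ hp hn
    rw [Finset.HasAntidiagonal.mem_antidiagonal] at hp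
    by_cases hd : ∀ i, 3 ∣ a i
    · exfalso
      apply hn
      let a' : Fin n →₀ ℕ := Finsupp.equivFunOnFinite.symm (fun i => a i / 3)
      have ha' : ∀ i, a' i = a i / 3 := fun i => rfl
      have hle : ∀ i, a' i ≤ m i := by
        intro i
        have h1 := DFunLike.congr_fun hp i
        simp only [Finsupp.add_apply, Finsupp.smul_apply, smul_eq_mul, ex_apply] at h1
        have h2 := (α i).2
        rw [ha']; omega
      refine ⟨(a', m - a'), ?_, ?_⟩
      · simp only [Finset.mem_coe, Finset.HasAntidiagonal.mem_antidiagonal]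
        exact add_tsub_cancel_of_le hle
      · simp only [Prod.mk.injEq]
        have e1 : 3 • a' = a := by
          ext i
          simp only [Finsupp.smul_apply, smul_eq_mul, ha']
          exact Nat.mul_div_cancel' (hd i)
        refine ⟨e1, ?_⟩
        ext i
        have h1 := DFunLike.congr_fun hp i
        have h3 := hle i
        have h4 := DFunLike.congr_fun e1 i
        simp only [Finsupp.add_apply, Finsupp.smul_apply, smul_eq_mul, Finsupp.tsub_apply] at *
        omega
    · push Not at hd
      obtain ⟨i, hi⟩ := hd
      simp only
      rw [coeff_expand_of_not_dvd _ _ _ hi, zero_mul]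
  · rintro ⟨a, b⟩ -
    simp only
    rw [coeff_expand_smul, coeff_pr]

lemma pr_joint_surj (g : (Fin n → Fin 3) → MvPowerSeries (Fin n) k) :
    ∃ f, ∀ α, pr α f = g α := by
  let f : MvPowerSeries (Fin n) k := fun b =>
    coeff (Finsupp.equivFunOnFinite.symm (fun i => b i / 3))
      (g (fun i => ⟨b i % 3, Nat.mod_lt _ (by norm_num)⟩))
  have hf : ∀ b, coeff b f = coeff (Finsupp.equivFunOnFinite.symm (fun i => b i / 3))
      (g (fun i => ⟨b i % 3, Nat.mod_lt _ (by norm_num)⟩)) := fun b => rfl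
  refine ⟨f, fun α => ?_⟩
  ext m
  rw [coeff_pr, hf]
  have e1 : (Finsupp.equivFunOnFinite.symm (fun i => (3 • m + ex α) i / 3) : Fin n →₀ ℕ) = m := by
    ext i
    have h2 := (α i).2
    simp only [Finsupp.equivFunOnFinite_symm_apply_apply, Finsupp.add_apply, Finsupp.smul_apply,
      smul_eq_mul, ex_apply]
    omega
  have e2 : (fun i => ⟨(3 • m + ex α) i % 3, Nat.mod_lt _ (by norm_num)⟩ : Fin n → Fin 3) = α := by
    funext i
    have h2 := (α i).2
    apply Fin.ext
    simp only [Finsupp.add_apply, Finsupp.smul_apply, smul_eq_mul, ex_apply]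
    omega
  rw [e1, e2]

lemma hk_expand (q : ℕ) (H : MvPowerSeries (Fin n) k) :
    3 ^ n * hk q H ≤ hk (3 * q) (expand 3 (by norm_num) H) := by
  let W := (Fin n → Fin 3) → (MvPowerSeries (Fin n) k ⧸ (Ideal.span {H} ⊔ bI k n q))
  let L : MvPowerSeries (Fin n) k →ₗ[k] W := LinearMap.pi fun α =>
    (Ideal.Quotient.mkₐ k (Ideal.span {H} ⊔ bI k n q)).toLinearMap ∘ₗ pr α
  have hLa : ∀ f α, L f α = Ideal.Quotient.mk (Ideal.span {H} ⊔ bI k n q) (pr α f) :=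
    fun f α => rfl
  have hW : Module.finrank k W = 3 ^ n * hk q H := by
    simp only [W, Module.finrank_pi_fintype, hk]
    simp
  rw [← hW]
  refine le_hk (3 * q) _ L ?_ ?_ ?_
  · intro w
    choose g hg using fun α => Ideal.Quotient.mk_surjective (w α)
    obtain ⟨f, hf⟩ := pr_joint_surj g
    refine ⟨f, ?_⟩
    funext α
    rw [hLa, hf, hg]
  · intro f
    funext α
    rw [hLa, pr_expand, Pi.zero_apply, Ideal.Quotient.eq_zero_iff_mem]
    exact Ideal.mul_mem_right _ _ (Ideal.mem_sup_left (Ideal.mem_span_singleton_self H))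
  · intro f hf
    funext α
    rw [hLa, Pi.zero_apply, Ideal.Quotient.eq_zero_iff_mem]
    refine Ideal.mem_sup_right ?_
    rw [mem_bI] at hf ⊢
    intro m hm
    rw [coeff_pr]
    refine hf _ fun i => ?_
    have h1 := hm i
    have h2 := (α i).2
    simp only [Finsupp.add_apply, Finsupp.smul_apply, smul_eq_mul, ex_apply]
    omega

lemma hk_map (σ : k ≃+* k) (q : ℕ) (F : MvPowerSeries (Fin n) k) :
    hk q (map σ.toRingHom F) = hk q F := by
  let j : MvPowerSeries (Fin n) k ≃+* MvPowerSeries (Fin n) k :=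
    RingEquiv.ofRingHom (map σ.toRingHom) (map σ.symm.toRingHom)
      (by ext f m; simp) (by ext f m; simp)
  have hj : ∀ f, j f = map σ.toRingHom f := fun f => rfl
  have hJ : Ideal.span {map σ.toRingHom F} ⊔ bI k n q =
      Ideal.map (j : MvPowerSeries (Fin n) k →+* MvPowerSeries (Fin n) k)
        (Ideal.span {F} ⊔ bI k n q) := by
    rw [Ideal.map_sup, Ideal.map_span, bI, Ideal.map_span, Set.image_singleton, ← Set.range_comp]
    congr 2
    · congr 1
      funext i
      simp [hj]
  symm
  refine Algebra.finrank_eq_of_equiv_equiv σ (Ideal.quotientEquiv _ _ j hJ) ?_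
  ext r
  change Ideal.Quotient.mk _ (algebraMap k _ (σ r)) =
    Ideal.quotientEquiv _ _ j hJ (Ideal.Quotient.mk _ (algebraMap k _ r))
  rw [Ideal.quotientEquiv_mk, hj]
  congr 1
  simp [MvPowerSeries.algebraMap_apply]

lemma hk_mono [IsAlgClosed k] [CharP k 3] (d q : ℕ) (F : MvPowerSeries (Fin (d + 1)) k) :
    3 ^ d * hk q F ≤ hk (3 * q) F := by
  have h1 : F ^ 3 = expand 3 (by norm_num) (map (frobeniusEquiv k 3).toRingHom F) := by
    rw [← map_expand, ← map_frobenius_expand 3]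
    rfl
  have h2 := hk_expand q (map (frobeniusEquiv k 3).toRingHom F)
  rw [hk_map, ← h1] at h2
  have h3 := hk_cube (3 * q) F
  rw [pow_succ] at h2
  nlinarith

lemma hk_mono_pow [IsAlgClosed k] [CharP k 3] (d e : ℕ) (F : MvPowerSeries (Fin (d + 1)) k) :
    3 ^ (d * e) * hk 3 F ≤ hk (3 ^ (e + 1)) F := by
  induction e with
  | zero => simp
  | succ e ih =>
    calc 3 ^ (d * (e + 1)) * hk 3 F = 3 ^ d * (3 ^ (d * e) * hk 3 F) := by ring
      _ ≤ 3 ^ d * hk (3 ^ (e + 1)) F := Nat.mul_le_mul_left _ ih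
      _ ≤ hk (3 * 3 ^ (e + 1)) F := hk_mono _ _ _
      _ = _ := by rw [← pow_succ']

end HKA

namespace HKA

variable {k : Type*} [Field k] {n : ℕ}

/-- extension by zero from the box -/
noncomputable def extz (k : Type*) [Field k] (n r : ℕ) :
    ((Fin n → Fin r) → k) →ₗ[k] MvPowerSeries (Fin n) k where
  toFun g := fun m => if h : ∀ i, m i < r then g (fun i => ⟨m i, h i⟩) else 0
  map_add' f g := by
    funext m
    change _ = (if h : ∀ i, m i < r then f (fun i => ⟨m i, h i⟩) else 0) +
      (if h : ∀ i, m i < r then g (fun i => ⟨m i, h i⟩) else 0)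
    split_ifs <;> simp
  map_smul' c f := by
    funext m
    change _ = c • (if h : ∀ i, m i < r then f (fun i => ⟨m i, h i⟩) else 0)
    split_ifs <;> simp

lemma coeff_extz (r : ℕ) (g : (Fin n → Fin r) → k) (m : Fin n →₀ ℕ) :
    coeff m (extz k n r g) = if h : ∀ i, m i < r then g (fun i => ⟨m i, h i⟩) else 0 := rfl

lemma rank_lower (F : MvPowerSeries (Fin n) k) (hF : F ≠ 0) :
    ∃ s : ℕ, ∀ r : ℕ, r ^ n ≤ Module.finrank k (LinearMap.range (T (r + s) F)) := by
  obtain ⟨a, ha⟩ := exists_finsupp_eq_lexOrder_of_ne_zero hF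
  refine ⟨∑ i, a i, fun r => ?_⟩
  set s := ∑ i, a i with hs
  have has : ∀ i, a i ≤ s := fun i =>
    Finset.single_le_sum (f := fun i => a i) (fun _ _ => Nat.zero_le _) (Finset.mem_univ i)
  let L : ((Fin n → Fin r) → k) →ₗ[k] (LinearMap.range (T (r + s) F)) :=
    (T (r + s) F).rangeRestrict ∘ₗ
      (Ideal.Quotient.mkₐ k (bI k n (r + s))).toLinearMap ∘ₗ extz k n r
  have hL : ∀ g, ((L g : _) : MvPowerSeries (Fin n) k ⧸ bI k n (r + s)) =
      Ideal.Quotient.mk _ (F * extz k n r g) := by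
    intro g
    rw [← T_mk]; rfl
  have hinj : Function.Injective L := by
    rw [← LinearMap.ker_eq_bot, LinearMap.ker_eq_bot']
    intro g hg
    by_contra hne
    have hG : extz k n r g ≠ 0 := by
      intro h0
      apply hne
      funext m
      have := coeff_extz r g (Finsupp.equivFunOnFinite.symm (fun i => (m i : ℕ)))
      rw [h0, dif_pos (fun i => by simp)] at this
      rw [Pi.zero_apply]
      simpa using this.symm
    obtain ⟨b, hb⟩ := exists_finsupp_eq_lexOrder_of_ne_zero hG
    have hb0 := coeff_ne_zero_of_lexOrder hb.symm
    have hbr : ∀ i, b i < r := by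
      by_contra hh
      rw [coeff_extz, dif_neg hh] at hb0
      exact hb0 rfl
    have h1 := hL g
    rw [hg] at h1
    have h2 : F * extz k n r g ∈ bI k n (r + s) := by
      rw [← Ideal.Quotient.eq_zero_iff_mem]; exact h1.symm
    rw [mem_bI] at h2
    have h3 := h2 (a + b) (fun i => by
      have := has i
      have := hbr i
      simp only [Finsupp.add_apply]; omega)
    rw [coeff_mul_of_add_lexOrder ha hb] at h3
    exact mul_ne_zero (coeff_ne_zero_of_lexOrder ha.symm) hb0 h3
  have := LinearMap.finrank_le_finrank_of_injective hinj
  simpa using this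

lemma pow_bound (r s d : ℕ) : (r + s) ^ (d + 1) ≤ r ^ (d + 1) + (d + 1) * s * (r + s) ^ d := by
  induction d with
  | zero => simp
  | succ d ih =>
    calc (r + s) ^ (d + 1 + 1) = r * (r + s) ^ (d + 1) + s * (r + s) ^ (d + 1) := by ring
      _ ≤ r * (r ^ (d + 1) + (d + 1) * s * (r + s) ^ d) + s * (r + s) ^ (d + 1) := by gcongr
      _ = r ^ (d + 2) + (d + 1) * s * (r * (r + s) ^ d) + s * (r + s) ^ (d + 1) := by ring
      _ ≤ r ^ (d + 2) + (d + 1) * s * ((r + s) * (r + s) ^ d) + s * (r + s) ^ (d + 1) := by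
        gcongr; omega
      _ = _ := by ring

lemma hk_upper (d : ℕ) (F : MvPowerSeries (Fin (d + 1)) k) (hF : F ≠ 0) :
    ∃ C : ℕ, ∀ q : ℕ, hk q F ≤ C * q ^ d := by
  obtain ⟨s, hs⟩ := rank_lower F hF
  refine ⟨(d + 1) * s, fun q => ?_⟩
  have h1 := hk_add q F
  by_cases hq : s ≤ q
  · obtain ⟨r, rfl⟩ := Nat.exists_eq_add_of_le' hq
    have h2 := hs r
    have h3 := pow_bound r s d
    omega
  · have h2 : q ^ (d + 1) ≤ (d + 1) * s * q ^ d := by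
      rw [pow_succ, mul_comm]
      gcongr
      nlinarith
    omega

end HKA

namespace HKA

variable {k : Type*} [Field k] {n : ℕ}

/-- component along powers of the first variable -/
noncomputable def cc (j : ℕ) : MvPowerSeries (Fin (n + 1)) k →ₗ[k] MvPowerSeries (Fin n) k where
  toFun f := fun m => coeff (Finsupp.cons j m) f
  map_add' f g := by
    funext m
    exact map_add (coeff (Finsupp.cons j m)) f g
  map_smul' r f := by
    funext m
    exact map_smul (coeff (Finsupp.cons j m)) r f

lemma coeff_cc (j : ℕ) (f : MvPowerSeries (Fin (n + 1)) k) (m) :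
    coeff m (cc j f) = coeff (Finsupp.cons j m) f := rfl

lemma cc_bI (j : ℕ) (hj : j < 3) (f : MvPowerSeries (Fin (n + 1)) k) (hf : f ∈ bI k (n + 1) 3) :
    cc j f ∈ bI k n 3 := by
  rw [mem_bI] at hf ⊢
  intro m hm
  rw [coeff_cc]
  refine hf _ fun i => ?_
  refine Fin.cases ?_ (fun i => ?_) i
  · simpa using hj
  · simpa using hm i

lemma cc_surj (g : ℕ → MvPowerSeries (Fin n) k) : ∃ f, ∀ j, cc j f = g j := by
  let f : MvPowerSeries (Fin (n + 1)) k := fun b => coeff b.tail (g (b 0))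
  have hf : ∀ b, coeff b f = coeff b.tail (g (b 0)) := fun b => rfl
  refine ⟨f, fun j => ?_⟩
  ext m
  rw [coeff_cc, hf, Finsupp.tail_cons, Finsupp.cons_zero]

lemma cc_succ (j : ℕ) (i : Fin n) (f : MvPowerSeries (Fin (n + 1)) k) :
    cc j (X i.succ ^ 2 * f) = X i ^ 2 * cc j f := by
  classical
  ext m
  rw [coeff_cc, X_pow_eq, X_pow_eq, coeff_monomial_mul, coeff_monomial_mul]
  simp only [Finsupp.single_le_iff, Finsupp.cons_succ]
  split_ifs with h
  · rw [coeff_cc]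
    have : Finsupp.cons j m - Finsupp.single i.succ 2 = Finsupp.cons j (m - Finsupp.single i 2) := by
      ext l
      refine Fin.cases ?_ (fun l => ?_) l
      · simp [Finsupp.single_apply]
      · simp [Finsupp.single_apply]
    rw [this]
  · rfl

lemma cc_zero_lt (j : ℕ) (hj : j < 2) (f : MvPowerSeries (Fin (n + 1)) k) :
    cc j (X 0 ^ 2 * f) = 0 := by
  classical
  ext m
  rw [coeff_cc, X_pow_eq, coeff_monomial_mul, if_neg]
  · simp
  · simp only [Finsupp.single_le_iff, Finsupp.cons_zero]; omega

lemma cc_zero_two (f : MvPowerSeries (Fin (n + 1)) k) :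
    cc 2 (X 0 ^ 2 * f) = cc 0 f := by
  classical
  ext m
  rw [coeff_cc, X_pow_eq, coeff_monomial_mul, if_pos, coeff_cc, one_mul]
  · congr 2
    ext l
    refine Fin.cases ?_ (fun l => ?_) l
    · simp [Finsupp.single_apply]
    · simp [Finsupp.single_apply, Fin.succ_ne_zero]
  · simp [Finsupp.single_le_iff]

/-- sum of squares -/
noncomputable def Qd (k : Type*) [Field k] (n : ℕ) : MvPowerSeries (Fin n) k := ∑ i, X i ^ 2

lemma Qd_cc01 (j : ℕ) (hj : j < 2) (f : MvPowerSeries (Fin (n + 1)) k) :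
    cc j (Qd k (n + 1) * f) = Qd k n * cc j f := by
  simp only [Qd]
  rw [Fin.sum_univ_succ, add_mul, map_add, cc_zero_lt j hj, zero_add, Finset.sum_mul, map_sum,
    Finset.sum_mul]
  exact Finset.sum_congr rfl fun i _ => cc_succ j i f

lemma Qd_cc2 (f : MvPowerSeries (Fin (n + 1)) k) :
    cc 2 (Qd k (n + 1) * f) = Qd k n * cc 2 f + cc 0 f := by
  simp only [Qd]
  rw [Fin.sum_univ_succ, add_mul, map_add, cc_zero_two, add_comm, Finset.sum_mul, map_sum,
    Finset.sum_mul]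
  congr 1
  exact Finset.sum_congr rfl fun i _ => cc_succ 2 i f

lemma Qd_cube [CharP k 3] (f : MvPowerSeries (Fin n) k) : Qd k n ^ 3 * f ∈ bI k n 3 := by
  refine Ideal.mul_mem_right _ _ (cube_mem _ ?_)
  rw [mem_mI]
  simp [Qd]

lemma N_succ [CharP k 3] (n : ℕ) :
    hk 3 (Qd k n) + hk 3 (Qd k n ^ 2) ≤ hk 3 (Qd k (n + 1)) := by
  let I1 := Ideal.span {Qd k n} ⊔ bI k n 3
  let I2 := Ideal.span {Qd k n ^ 2} ⊔ bI k n 3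
  let L : MvPowerSeries (Fin (n + 1)) k →ₗ[k]
      (MvPowerSeries (Fin n) k ⧸ I1) × (MvPowerSeries (Fin n) k ⧸ I2) :=
    LinearMap.prod ((Ideal.Quotient.mkₐ k I1).toLinearMap ∘ₗ cc 1)
      ((Ideal.Quotient.mkₐ k I2).toLinearMap ∘ₗ
        (cc 0 - LinearMap.mulLeft k (Qd k n) ∘ₗ cc 2))
  have hL : ∀ f, L f = (Ideal.Quotient.mk I1 (cc 1 f),
      Ideal.Quotient.mk I2 (cc 0 f - Qd k n * cc 2 f)) := fun f => rfl
  have hW : Module.finrank k ((MvPowerSeries (Fin n) k ⧸ I1) × (MvPowerSeries (Fin n) k ⧸ I2)) =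
      hk 3 (Qd k n) + hk 3 (Qd k n ^ 2) := Module.finrank_prod
  rw [← hW]
  refine le_hk 3 _ L ?_ ?_ ?_
  · rintro ⟨w1, w2⟩
    obtain ⟨g1, rfl⟩ := Ideal.Quotient.mk_surjective w1
    obtain ⟨g2, rfl⟩ := Ideal.Quotient.mk_surjective w2
    obtain ⟨f, hf⟩ := cc_surj (fun j => if j = 0 then g2 else if j = 1 then g1 else 0)
    refine ⟨f, ?_⟩
    rw [hL, hf, hf, hf]
    simp
  · intro f
    rw [hL, Qd_cc01 0 (by norm_num), Qd_cc01 1 (by norm_num), Qd_cc2, Prod.mk_eq_zero,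
      Ideal.Quotient.eq_zero_iff_mem, Ideal.Quotient.eq_zero_iff_mem]
    constructor
    · exact Ideal.mul_mem_right _ _ (Ideal.mem_sup_left (Ideal.mem_span_singleton_self _))
    · have : Qd k n * cc 0 f - Qd k n * (Qd k n * cc 2 f + cc 0 f) =
        Qd k n ^ 2 * (- cc 2 f) := by ring
      rw [this]
      exact Ideal.mul_mem_right _ _ (Ideal.mem_sup_left (Ideal.mem_span_singleton_self _))
  · intro f hf
    rw [hL, Prod.mk_eq_zero, Ideal.Quotient.eq_zero_iff_mem, Ideal.Quotient.eq_zero_iff_mem]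
    exact ⟨Ideal.mem_sup_right (cc_bI 1 (by norm_num) f hf),
      Ideal.mem_sup_right (Ideal.sub_mem _ (cc_bI 0 (by norm_num) f hf)
        (Ideal.mul_mem_left _ _ (cc_bI 2 (by norm_num) f hf)))⟩

lemma three_zero [CharP k 3] : (3 : MvPowerSeries (Fin n) k) = 0 := by
  have := CharP.cast_eq_zero (MvPowerSeries (Fin n) k) 3
  exact_mod_cast this

lemma M_succ [CharP k 3] (n : ℕ) :
    hk 3 (Qd k n ^ 2) + (3 ^ n + hk 3 (Qd k n)) ≤ hk 3 (Qd k (n + 1) ^ 2) := by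
  let I1 := Ideal.span {Qd k n} ⊔ bI k n 3
  let I2 := Ideal.span {Qd k n ^ 2} ⊔ bI k n 3
  let L : MvPowerSeries (Fin (n + 1)) k →ₗ[k] (MvPowerSeries (Fin n) k ⧸ I2) ×
      ((MvPowerSeries (Fin n) k ⧸ bI k n 3) × (MvPowerSeries (Fin n) k ⧸ I1)) :=
    LinearMap.prod ((Ideal.Quotient.mkₐ k I2).toLinearMap ∘ₗ cc 1)
      (LinearMap.prod ((Ideal.Quotient.mkₐ k (bI k n 3)).toLinearMap ∘ₗ
        (cc 0 + LinearMap.mulLeft k (Qd k n) ∘ₗ cc 2))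
        ((Ideal.Quotient.mkₐ k I1).toLinearMap ∘ₗ cc 2))
  have hL : ∀ f, L f = (Ideal.Quotient.mk I2 (cc 1 f),
      (Ideal.Quotient.mk (bI k n 3) (cc 0 f + Qd k n * cc 2 f), Ideal.Quotient.mk I1 (cc 2 f))) :=
    fun f => rfl
  have hW : Module.finrank k ((MvPowerSeries (Fin n) k ⧸ I2) ×
      ((MvPowerSeries (Fin n) k ⧸ bI k n 3) × (MvPowerSeries (Fin n) k ⧸ I1))) =
      hk 3 (Qd k n ^ 2) + (3 ^ n + hk 3 (Qd k n)) := by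
    rw [Module.finrank_prod, Module.finrank_prod, finrankV]
    rfl
  rw [← hW]
  refine le_hk 3 _ L ?_ ?_ ?_
  · rintro ⟨w1, w2, w3⟩
    obtain ⟨g1, rfl⟩ := Ideal.Quotient.mk_surjective w1
    obtain ⟨g2, rfl⟩ := Ideal.Quotient.mk_surjective w2
    obtain ⟨g3, rfl⟩ := Ideal.Quotient.mk_surjective w3
    obtain ⟨f, hf⟩ := cc_surj (fun j => if j = 0 then g2 - Qd k n * g3 else if j = 1 then g1 else g3)
    refine ⟨f, ?_⟩
    rw [hL, hf, hf, hf]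
    simp
  · intro f
    have e : Qd k (n + 1) ^ 2 * f = Qd k (n + 1) * (Qd k (n + 1) * f) := by ring
    rw [hL, e, Qd_cc01 0 (by norm_num), Qd_cc01 1 (by norm_num), Qd_cc2,
      Qd_cc01 0 (by norm_num), Qd_cc01 1 (by norm_num), Qd_cc2, Prod.mk_eq_zero, Prod.mk_eq_zero,
      Ideal.Quotient.eq_zero_iff_mem, Ideal.Quotient.eq_zero_iff_mem,
      Ideal.Quotient.eq_zero_iff_mem]
    refine ⟨?_, ?_, ?_⟩
    · rw [← mul_assoc, ← sq]
      exact Ideal.mul_mem_right _ _ (Ideal.mem_sup_left (Ideal.mem_span_singleton_self _))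
    · have : Qd k n * (Qd k n * cc 0 f) + Qd k n * (Qd k n * (Qd k n * cc 2 f + cc 0 f)
        + Qd k n * cc 0 f) = Qd k n ^ 3 * cc 2 f + 3 * (Qd k n ^ 2 * cc 0 f) := by ring
      rw [this, three_zero, zero_mul, add_zero]
      exact Qd_cube _
    · rw [← mul_add]
      exact Ideal.mul_mem_right _ _ (Ideal.mem_sup_left (Ideal.mem_span_singleton_self _))
  · intro f hf
    rw [hL, Prod.mk_eq_zero, Prod.mk_eq_zero, Ideal.Quotient.eq_zero_iff_mem,
      Ideal.Quotient.eq_zero_iff_mem, Ideal.Quotient.eq_zero_iff_mem]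
    exact ⟨Ideal.mem_sup_right (cc_bI 1 (by norm_num) f hf),
      Ideal.add_mem _ (cc_bI 0 (by norm_num) f hf)
        (Ideal.mul_mem_left _ _ (cc_bI 2 (by norm_num) f hf)),
      Ideal.mem_sup_right (cc_bI 2 (by norm_num) f hf)⟩

lemma hk_zero_pos (F : MvPowerSeries (Fin n) k) (hF : F ∈ mI k n) : 1 ≤ hk 3 F := by
  rw [mem_mI] at hF
  have := le_hk 3 F (W := k) (coeff 0) (fun c => ⟨C c, by simp⟩) (fun f => by simp [hF])
    (fun f hf => (mem_bI.mp hf) 0 (by simp))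
  simpa using this

lemma NM [CharP k 3] (n : ℕ) : 3 ^ n + 2 ^ n ≤ hk 3 (Qd k (n + 1)) ∧
    2 * 3 ^ n + 2 ^ n ≤ hk 3 (Qd k (n + 1) ^ 2) := by
  induction n with
  | zero =>
    have h1 := hk_zero_pos (Qd k 0) (by rw [mem_mI]; simp [Qd])
    have h2 := hk_zero_pos (Qd k 0 ^ 2) (by rw [mem_mI]; simp [Qd])
    have h3 := N_succ (k := k) 0
    have h4 := M_succ (k := k) 0
    simp only [pow_zero, zero_add] at *
    omega
  | succ n ih =>
    have h3 := N_succ (k := k) (n + 1)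
    have h4 := M_succ (k := k) (n + 1)
    obtain ⟨h1, h2⟩ := ih
    simp only [pow_succ] at *
    omega

lemma model [CharP k 3] (n : ℕ) :
    3 * (3 ^ n + 2 ^ n) ≤ hk 3 (∑ i : Fin (n + 1), (X i.succ : MvPowerSeries (Fin (n + 2)) k) ^ 2) := by
  refine le_trans (Nat.mul_le_mul_left 3 (NM (k := k) n).1) ?_
  let I1 := Ideal.span {Qd k (n + 1)} ⊔ bI k (n + 1) 3
  let L : MvPowerSeries (Fin (n + 2)) k →ₗ[k] (Fin 3 → (MvPowerSeries (Fin (n + 1)) k ⧸ I1)) :=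
    LinearMap.pi fun j => (Ideal.Quotient.mkₐ k I1).toLinearMap ∘ₗ cc (j : ℕ)
  have hL : ∀ f j, L f j = Ideal.Quotient.mk I1 (cc (j : ℕ) f) := fun f j => rfl
  have hW : Module.finrank k (Fin 3 → (MvPowerSeries (Fin (n + 1)) k ⧸ I1)) =
      3 * hk 3 (Qd k (n + 1)) := by
    rw [Module.finrank_pi_fintype]
    simp [hk, I1]
  rw [← hW]
  refine le_hk 3 _ L ?_ ?_ ?_
  · intro w
    choose g hg using fun j => Ideal.Quotient.mk_surjective (w j)
    obtain ⟨f, hf⟩ := cc_surj (fun j => if h : j < 3 then g ⟨j, h⟩ else 0)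
    refine ⟨f, ?_⟩
    funext j
    rw [hL, hf, dif_pos j.2, hg]
  · intro f
    funext j
    rw [hL, Finset.sum_mul, map_sum, Pi.zero_apply, Ideal.Quotient.eq_zero_iff_mem]
    have : ∑ i : Fin (n + 1), cc (j : ℕ) (X i.succ ^ 2 * f) = Qd k (n + 1) * cc (j : ℕ) f := by
      rw [Qd, Finset.sum_mul]
      exact Finset.sum_congr rfl fun i _ => cc_succ _ i f
    rw [this]
    exact Ideal.mul_mem_right _ _ (Ideal.mem_sup_left (Ideal.mem_span_singleton_self _))
  · intro f hf
    funext j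
    rw [hL, Pi.zero_apply, Ideal.Quotient.eq_zero_iff_mem]
    exact Ideal.mem_sup_right (cc_bI _ j.2 f hf)

end HKA

namespace HKA

variable {k : Type*} [Field k] {n : ℕ}

lemma rank_semicont {V : Type*} [AddCommGroup V] [Module k V] [Module.Finite k V]
    (S U : V →ₗ[k] V) : ∃ p : Polynomial k, p ≠ 0 ∧ ∀ t, p.eval t ≠ 0 →
      Module.finrank k (LinearMap.range S) ≤ Module.finrank k (LinearMap.range (S + t • U)) := by
  classical
  let r := Module.finrank k (LinearMap.range S)
  let b : Module.Basis (Fin r) k (LinearMap.range S) := Module.finBasis k (LinearMap.range S)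
  choose v hv using fun j => (b j).2
  obtain ⟨π0, hπ0⟩ := LinearMap.exists_leftInverse_of_injective (LinearMap.range S).subtype
    (Submodule.ker_subtype _)
  let π : V →ₗ[k] (Fin r → k) := b.equivFun.toLinearMap ∘ₗ π0
  let ι : (Fin r → k) →ₗ[k] V := (Pi.basisFun k (Fin r)).constr k v
  have hι : ∀ j, ι (Pi.single j 1) = v j := by
    intro j
    simp [ι]
  have hid : π ∘ₗ S ∘ₗ ι = LinearMap.id := by
    refine (Pi.basisFun k (Fin r)).ext fun j => ?_
    have h1 : π0 (b j : V) = b j := LinearMap.congr_fun hπ0 (b j)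
    simp only [Pi.basisFun_apply, LinearMap.comp_apply, LinearMap.id_apply, hι, hv, π, h1]
    simp [Finsupp.single_eq_pi_single]
  let M : Matrix (Fin r) (Fin r) k := LinearMap.toMatrix' (π ∘ₗ U ∘ₗ ι)
  let p : Polynomial k := (1 + (Polynomial.X : Polynomial k) • M.map Polynomial.C).det
  have hp : ∀ t, p.eval t = (1 + t • M).det := by
    intro t
    simp only [p]
    rw [← Polynomial.coe_evalRingHom, RingHom.map_det]
    congr 1
    ext i j
    simp [Matrix.one_apply, apply_ite]
    exact mul_comm _ _
  refine ⟨p, ?_, fun t ht => ?_⟩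
  · intro h0
    have := hp 0
    rw [h0] at this
    simp at this
  · rw [hp] at ht
    let R := π ∘ₗ (S + t • U) ∘ₗ ι
    have hR : LinearMap.toMatrix' R = 1 + t • M := by
      have : R = LinearMap.id + t • (π ∘ₗ U ∘ₗ ι) := by
        rw [← hid]
        refine LinearMap.ext fun x => ?_
        simp [R]
      rw [this]
      simp [M]
    have hs : Function.Surjective R := by
      have hu : IsUnit (1 + t • M).det := isUnit_iff_ne_zero.mpr ht
      intro w
      refine ⟨(1 + t • M)⁻¹.mulVec w, ?_⟩
      have : R = Matrix.toLin' (1 + t • M) := by rw [← hR]; simp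
      rw [this, Matrix.toLin'_apply, Matrix.mulVec_mulVec, Matrix.mul_nonsing_inv _ hu,
        Matrix.one_mulVec]
    have h2 : Function.Surjective (π ∘ₗ (LinearMap.range (S + t • U)).subtype) := by
      intro w
      obtain ⟨x, hx⟩ := hs w
      exact ⟨⟨(S + t • U) (ι x), ⟨_, rfl⟩⟩, hx⟩
    have h3 := LinearMap.finrank_le_finrank_of_surjective h2
    simpa [r] using h3

lemma hk_semicont (q : ℕ) (F G : MvPowerSeries (Fin n) k) :
    ∃ p : Polynomial k, p ≠ 0 ∧ ∀ t, p.eval t ≠ 0 → hk q (F + C t * G) ≤ hk q F := by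
  obtain ⟨p, hp, h⟩ := rank_semicont (T q F) (T q G)
  refine ⟨p, hp, fun t ht => ?_⟩
  have h1 := h t ht
  have h2 : T q F + t • T q G = T q (F + C t * G) := by
    refine LinearMap.ext fun x => ?_
    obtain ⟨g, rfl⟩ := Ideal.Quotient.mk_surjective x
    rw [LinearMap.add_apply, LinearMap.smul_apply, T_mk, T_mk, T_mk, add_mul, map_add, mul_assoc,
      ← smul_eq_C_mul]
    rfl
  rw [h2] at h1
  have h3 := hk_add q F
  have h4 := hk_add q (F + C t * G)
  omega

end HKA

namespace HKA

variable {k : Type*} [Field k] {n : ℕ}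

lemma span_shear {R : Type*} [CommRing R] {N : ℕ} (y : R) (u : Fin N → R) (r : Fin N → R) :
    Ideal.span (Set.range (Fin.cons y (fun i => u i + r i * y) : Fin (N + 1) → R)) =
      Ideal.span (Set.range (Fin.cons y u : Fin (N + 1) → R)) := by
  apply le_antisymm <;> rw [Ideal.span_le] <;> rintro _ ⟨i, rfl⟩ <;>
    refine Fin.cases ?_ (fun i => ?_) i
  · exact Ideal.subset_span ⟨0, rfl⟩
  · rw [Fin.cons_succ]
    exact Ideal.add_mem _ (Ideal.subset_span ⟨i.succ, by simp⟩)
      (Ideal.mul_mem_left _ _ (Ideal.subset_span ⟨0, rfl⟩))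
  · exact Ideal.subset_span ⟨0, rfl⟩
  · rw [Fin.cons_succ]
    have : u i = (u i + r i * y) - r i * y := by ring
    rw [this]
    exact Ideal.sub_mem _ (Ideal.subset_span ⟨i.succ, by simp⟩)
      (Ideal.mul_mem_left _ _ (Ideal.subset_span ⟨0, rfl⟩))

lemma mulVec_mem {R : Type*} [CommRing R] {N : ℕ} (I : Ideal R) (P : Matrix (Fin N) (Fin N) R)
    (u : Fin N → R) (hu : ∀ i, u i ∈ I) (i : Fin N) : P.mulVec u i ∈ I := by
  unfold Matrix.mulVec dotProduct
  exact Ideal.sum_mem _ fun j _ => Ideal.mul_mem_left _ _ (hu j)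

lemma span_lin_le {R : Type*} [CommRing R] {N : ℕ} (y : R) (u : Fin N → R)
    (P : Matrix (Fin N) (Fin N) R) :
    Ideal.span (Set.range (Fin.cons y (P.mulVec u) : Fin (N + 1) → R)) ≤
      Ideal.span (Set.range (Fin.cons y u : Fin (N + 1) → R)) := by
  rw [Ideal.span_le]
  rintro _ ⟨i, rfl⟩
  refine Fin.cases ?_ (fun i => ?_) i
  · exact Ideal.subset_span ⟨0, rfl⟩
  · rw [Fin.cons_succ]
    refine mulVec_mem _ _ _ (fun j => ?_) i
    exact Ideal.subset_span ⟨j.succ, by simp⟩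

lemma span_lin {R : Type*} [CommRing R] {N : ℕ} (y : R) (u : Fin N → R)
    (P Pi : Matrix (Fin N) (Fin N) R) (h : Pi * P = 1) :
    Ideal.span (Set.range (Fin.cons y (P.mulVec u) : Fin (N + 1) → R)) =
      Ideal.span (Set.range (Fin.cons y u : Fin (N + 1) → R)) := by
  refine le_antisymm (span_lin_le y u P) ?_
  have := span_lin_le y (P.mulVec u) Pi
  rwa [Matrix.mulVec_mulVec, h, Matrix.one_mulVec] at this

lemma span_mat_le {R : Type*} [CommRing R] {N : ℕ} (u : Fin N → R)
    (P : Matrix (Fin N) (Fin N) R) :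
    Ideal.span (Set.range (P.mulVec u)) ≤ Ideal.span (Set.range u) := by
  rw [Ideal.span_le]
  rintro _ ⟨i, rfl⟩
  refine mulVec_mem _ _ _ (fun j => ?_) i
  exact Ideal.subset_span ⟨j, rfl⟩

lemma span_mat {R : Type*} [CommRing R] {N : ℕ} (u : Fin N → R)
    (P Pi : Matrix (Fin N) (Fin N) R) (h : Pi * P = 1) :
    Ideal.span (Set.range (P.mulVec u)) = Ideal.span (Set.range u) := by
  refine le_antisymm (span_mat_le u P) ?_
  have := span_mat_le (P.mulVec u) Pi
  rwa [Matrix.mulVec_mulVec, h, Matrix.one_mulVec] at this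

open Matrix in
lemma quad_mat {R : Type*} [CommRing R] {N : ℕ} (u : Fin N → R) (P a : Matrix (Fin N) (Fin N) R) :
    (P *ᵥ u) ⬝ᵥ (a *ᵥ (P *ᵥ u)) = u ⬝ᵥ ((Pᵀ * a * P) *ᵥ u) := by
  rw [Matrix.mul_assoc, ← Matrix.mulVec_mulVec u Pᵀ, Matrix.dotProduct_mulVec u Pᵀ,
    Matrix.vecMul_transpose, Matrix.mulVec_mulVec]

open Matrix in
lemma core [IsAlgClosed k] [CharP k 3] {d : ℕ} (y0 : MvPowerSeries (Fin (d + 1)) k)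
    (y : Fin d → MvPowerSeries (Fin (d + 1)) k)
    (hy : Ideal.span (Set.range (Fin.cons y0 y : Fin (d + 1) → MvPowerSeries (Fin (d + 1)) k)) =
      mI k (d + 1))
    (b : Matrix (Fin d) (Fin d) (MvPowerSeries (Fin (d + 1)) k)) (hbs : ∀ i j, b i j = b j i)
    (hb : (b.map constantCoeff).det ≠ 0)
    (c : Fin d → MvPowerSeries (Fin (d + 1)) k) (hc : ∀ i, c i ∈ mI k (d + 1))
    (c0 : MvPowerSeries (Fin (d + 1)) k) (hc0 : c0 ∈ mI k (d + 1)) :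
    hk 3 (∑ i : Fin d, (X i.succ : MvPowerSeries (Fin (d + 1)) k) ^ 2) ≤
      hk 3 (y ⬝ᵥ (b *ᵥ y) + 2 * (c ⬝ᵥ y) * y0 + c0 * y0 ^ 2) := by
  obtain ⟨P, Pi, hP, hl, hr⟩ := mat_sq d b hbs hb
  let z := P *ᵥ y
  let b' := Piᵀ *ᵥ c
  have hyz : y = Pi *ᵥ z := by
    simp only [z]
    rw [Matrix.mulVec_mulVec, hl, Matrix.one_mulVec]
  have hb'm : ∀ i, b' i ∈ mI k (d + 1) := fun i =>
    mulVec_mem _ _ _ hc i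
  have e1 : y ⬝ᵥ (b *ᵥ y) = ∑ i, z i ^ 2 := by
    have := quad_mat y P 1
    rw [Matrix.mul_one, hP, Matrix.one_mulVec] at this
    rw [← this]
    simp [dotProduct, z, sq]
  have e2 : c ⬝ᵥ y = ∑ i, b' i * z i := by
    rw [hyz, Matrix.dotProduct_mulVec, ← Matrix.mulVec_transpose]
    rfl
  let u : Fin d → MvPowerSeries (Fin (d + 1)) k := fun i => z i + b' i * y0
  have hu : Ideal.span (Set.range (Fin.cons y0 u : Fin (d + 1) → MvPowerSeries (Fin (d + 1)) k)) =
      mI k (d + 1) := by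
    rw [← hy, ← span_lin y0 y P Pi hl]
    exact span_shear y0 z b'
  let g := c0 - ∑ i, b' i ^ 2
  have hg : g ∈ mI k (d + 1) := Ideal.sub_mem _ hc0
    (Ideal.sum_mem _ fun i _ => by rw [sq]; exact Ideal.mul_mem_left _ _ (hb'm i))
  have hg' := hg
  rw [← hu] at hg'
  obtain ⟨h, hh⟩ := Ideal.mem_span_range_iff_exists_fun.mp hg'
  rw [Fin.sum_univ_succ] at hh
  simp only [Fin.cons_zero, Fin.cons_succ] at hh
  let w : Fin d → MvPowerSeries (Fin (d + 1)) k := fun i => u i + (- (h i.succ * y0)) * y0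
  have hw : Ideal.span (Set.range (Fin.cons y0 w : Fin (d + 1) → MvPowerSeries (Fin (d + 1)) k)) =
      mI k (d + 1) := by
    rw [← hu]
    exact span_shear y0 u (fun i => - (h i.succ * y0))
  obtain ⟨φ, hφ⟩ := exists_auto _ hw
  have hφs : φ (∑ i : Fin d, (X i.succ : MvPowerSeries (Fin (d + 1)) k) ^ 2) = ∑ i, w i ^ 2 := by
    rw [map_sum]
    refine Finset.sum_congr rfl fun i _ => ?_
    rw [map_pow, hφ, Fin.cons_succ]
  refine (hk_auto φ _).trans (le_of_eq ?_)
  rw [hφs]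
  symm
  apply hk_congr
  have hy0 : y0 ∈ mI k (d + 1) := by
    rw [← hy]
    exact Ideal.subset_span ⟨0, rfl⟩
  have key : y ⬝ᵥ (b *ᵥ y) + 2 * (c ⬝ᵥ y) * y0 + c0 * y0 ^ 2 - ∑ i, w i ^ 2 =
      (h 0 - y0 * ∑ i : Fin d, h i.succ ^ 2) * y0 ^ 3 + 3 * (y0 ^ 2 * ∑ i : Fin d, h i.succ * u i) := by
    have s1 : ∑ i, u i ^ 2 = ∑ i, z i ^ 2 + 2 * y0 * ∑ i, b' i * z i + y0 ^ 2 * ∑ i, b' i ^ 2 := by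
      rw [Finset.mul_sum, Finset.mul_sum, ← Finset.sum_add_distrib, ← Finset.sum_add_distrib]
      refine Finset.sum_congr rfl fun i _ => ?_
      simp only [u]; ring
    have s2 : ∑ i, w i ^ 2 = ∑ i, u i ^ 2 - 2 * y0 ^ 2 * ∑ i : Fin d, h i.succ * u i +
        y0 ^ 4 * ∑ i : Fin d, h i.succ ^ 2 := by
      rw [Finset.mul_sum, Finset.mul_sum, ← Finset.sum_sub_distrib, ← Finset.sum_add_distrib]
      refine Finset.sum_congr rfl fun i _ => ?_
      simp only [w]; ring
    have s3 : c0 = h 0 * y0 + ∑ i : Fin d, h i.succ * u i + ∑ i, b' i ^ 2 := by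
      rw [hh]; simp only [g]; ring
    rw [e1, e2, s2, s1]
    linear_combination y0 ^ 2 * s3
  rw [key, three_zero, zero_mul, add_zero]
  exact Ideal.mul_mem_left _ _ (cube_mem y0 hy0)

end HKA

namespace HKA

variable {k : Type*} [Field k] {n : ℕ}

open Matrix in
lemma exists_quad [CharP k 3] (F : MvPowerSeries (Fin n) k) (hF : F ∈ mI k n ^ 2) :
    ∃ a : Matrix (Fin n) (Fin n) (MvPowerSeries (Fin n) k), aᵀ = a ∧
      F = (fun i => X i) ⬝ᵥ (a *ᵥ (fun i => X i)) := by
  rw [sq] at hF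
  refine Submodule.mul_induction_on hF ?_ ?_
  · intro x hx y hy
    obtain ⟨c, rfl⟩ := Ideal.mem_span_range_iff_exists_fun.mp hx
    obtain ⟨e, rfl⟩ := Ideal.mem_span_range_iff_exists_fun.mp hy
    refine ⟨Matrix.of fun i j => 2 * (c i * e j + c j * e i), ?_, ?_⟩
    · refine Matrix.ext fun i j => ?_
      simp only [Matrix.transpose_apply, Matrix.of_apply]
      ring
    · unfold Matrix.mulVec dotProduct
      simp only [Matrix.of_apply, Finset.mul_sum]
      have h4 : (4 : MvPowerSeries (Fin n) k) = 1 := by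
        linear_combination three_zero (k := k) (n := n)
      have e1 : ∑ i, ∑ j, (X i : MvPowerSeries (Fin n) k) * (2 * (c i * e j + c j * e i) * X j) =
          2 * ((∑ i, c i * X i) * (∑ j, e j * X j)) + 2 * ((∑ i, e i * X i) * (∑ j, c j * X j)) := by
        rw [Finset.sum_mul_sum, Finset.sum_mul_sum, Finset.mul_sum, Finset.mul_sum,
          ← Finset.sum_add_distrib]
        refine Finset.sum_congr rfl fun i _ => ?_
        rw [Finset.mul_sum, Finset.mul_sum, ← Finset.sum_add_distrib]
        refine Finset.sum_congr rfl fun j _ => ?_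
        ring
      rw [e1, ← Finset.mul_sum]
      linear_combination (-(∑ i, c i * X i) * (∑ j, e j * X j)) * h4
  · rintro x y ⟨a, ha, rfl⟩ ⟨b, hb, rfl⟩
    refine ⟨a + b, by rw [Matrix.transpose_add, ha, hb], ?_⟩
    rw [Matrix.add_mulVec, dotProduct_add]

open Matrix in
lemma A1_case [IsAlgClosed k] [CharP k 3]
    (a : Matrix (Fin n) (Fin n) (MvPowerSeries (Fin n) k)) (ha : aᵀ = a)
    (hd : (a.map constantCoeff).det ≠ 0) :
    ∃ φ : MvPowerSeries (Fin n) k ≃ₐ[k] MvPowerSeries (Fin n) k,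
      φ (∑ i, X i ^ 2) = (fun i => X i) ⬝ᵥ (a *ᵥ (fun i => X i)) := by
  obtain ⟨P, Pi, hP, hl, hr⟩ := mat_sq n a (fun i j => congrFun (congrFun ha j) i) hd
  obtain ⟨φ, hφ⟩ := exists_auto (P *ᵥ (fun i => X i)) (span_mat _ P Pi hl)
  refine ⟨φ, ?_⟩
  rw [map_sum]
  simp only [map_pow, hφ]
  have := quad_mat (fun i => (X i : MvPowerSeries (Fin n) k)) P 1
  rw [Matrix.mul_one, hP, Matrix.one_mulVec] at this
  rw [← this]
  simp [dotProduct, sq]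

open Matrix in
lemma exists_L {N : ℕ} (v : Fin (N + 1) → k) (hv : v ≠ 0) :
    ∃ L : Matrix (Fin (N + 1)) (Fin (N + 1)) k, IsUnit L.det ∧ ∀ i, L i 0 = v i := by
  obtain ⟨i0, hi0⟩ := Function.ne_iff.mp hv
  refine ⟨(Matrix.updateCol 1 i0 v).submatrix id (Equiv.swap 0 i0), ?_, fun i => ?_⟩
  · rw [Matrix.det_permute']
    have : (Matrix.updateCol (1 : Matrix (Fin (N + 1)) (Fin (N + 1)) k) i0 v).det = v i0 := by
      rw [← Matrix.cramer_apply, Matrix.cramer_one]; rfl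
    rw [this]
    refine IsUnit.mul ?_ (isUnit_iff_ne_zero.mpr hi0)
    exact (Units.isUnit (Equiv.Perm.sign (Equiv.swap 0 i0))).map (Int.castRingHom k)
  · simp

open Matrix in
lemma degen [IsAlgClosed k] [CharP k 3] {d : ℕ}
    (a : Matrix (Fin (d + 1)) (Fin (d + 1)) (MvPowerSeries (Fin (d + 1)) k)) (ha : aᵀ = a)
    (hd : (a.map constantCoeff).det = 0) :
    hk 3 (∑ i : Fin d, (X i.succ : MvPowerSeries (Fin (d + 1)) k) ^ 2) ≤
      hk 3 ((fun i => X i) ⬝ᵥ (a *ᵥ (fun i => X i))) := by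
  obtain ⟨v, hv, hav⟩ := Matrix.exists_mulVec_eq_zero_iff.mpr hd
  obtain ⟨L0, hL0, hLv⟩ := exists_L v hv
  let L := L0.map (C : k →+* MvPowerSeries (Fin (d + 1)) k)
  let Li := (L0⁻¹).map (C : k →+* MvPowerSeries (Fin (d + 1)) k)
  have hLLi : L * Li = 1 := by
    simp only [L, Li]
    rw [← Matrix.map_mul, Matrix.mul_nonsing_inv _ hL0]
    simp
  have hLc : L.map constantCoeff = L0 := by ext i j; simp [L]
  have hLtc : Lᵀ.map constantCoeff = L0ᵀ := by ext i j; simp [L]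
  let x : Fin (d + 1) → MvPowerSeries (Fin (d + 1)) k := fun i => X i
  let Y := Li *ᵥ x
  have hxY : x = L *ᵥ Y := by
    simp only [Y]
    rw [Matrix.mulVec_mulVec, hLLi, Matrix.one_mulVec]
  have hY : Ideal.span (Set.range Y) = mI k (d + 1) := span_mat x Li L hLLi
  let a' := Lᵀ * a * L
  have ha' : a'ᵀ = a' := by
    simp only [a', Matrix.transpose_mul, Matrix.transpose_transpose, ha, Matrix.mul_assoc]
  have has : ∀ i j, a' i j = a' j i := fun i j => congrFun (congrFun ha' j) i
  have hF : x ⬝ᵥ (a *ᵥ x) = Y ⬝ᵥ (a' *ᵥ Y) := by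
    rw [hxY, quad_mat]
  have hcol : ∀ i, a' i 0 ∈ mI k (d + 1) := by
    intro i
    rw [mem_mI]
    have h1 : constantCoeff (a' i 0) = (a'.map constantCoeff) i 0 := rfl
    rw [h1]
    simp only [a', Matrix.map_mul]
    rw [hLc, hLtc, Matrix.mul_assoc, Matrix.mul_apply]
    refine Finset.sum_eq_zero fun l _ => ?_
    have h2 : (a.map constantCoeff * L0) l 0 = 0 := by
      rw [Matrix.mul_apply]
      simp only [hLv]
      exact congrFun hav l
    rw [h2, mul_zero]
  let y0 := Y 0
  let y : Fin d → MvPowerSeries (Fin (d + 1)) k := fun i => Y i.succ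
  have hcons : (Fin.cons y0 y : Fin (d + 1) → MvPowerSeries (Fin (d + 1)) k) = Y := by
    funext i
    refine Fin.cases ?_ (fun i => ?_) i <;> rfl
  let b : Matrix (Fin d) (Fin d) (MvPowerSeries (Fin (d + 1)) k) := a'.submatrix Fin.succ Fin.succ
  let c : Fin d → MvPowerSeries (Fin (d + 1)) k := fun i => a' i.succ 0
  have hF2 : Y ⬝ᵥ (a' *ᵥ Y) = y ⬝ᵥ (b *ᵥ y) + 2 * (c ⬝ᵥ y) * y0 + a' 0 0 * y0 ^ 2 := by
    unfold Matrix.mulVec dotProduct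
    simp only [Fin.sum_univ_succ, b, c, y, y0, Matrix.submatrix_apply]
    have h1 : ∀ i : Fin d, a' 0 i.succ = a' i.succ 0 := fun i => has _ _
    simp only [h1, mul_add, Finset.sum_add_distrib]
    have h2 : ∑ i : Fin d, Y i.succ * (a' i.succ 0 * Y 0) =
        Y 0 * ∑ i : Fin d, a' i.succ 0 * Y i.succ := by
      rw [Finset.mul_sum]
      exact Finset.sum_congr rfl fun i _ => by ring
    rw [h2]
    ring
  let G := ∑ i, y i ^ 2
  obtain ⟨p, hp0, hp⟩ := hk_semicont 3 (x ⬝ᵥ (a *ᵥ x)) G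
  let B0 := b.map constantCoeff
  obtain ⟨t, ht⟩ : ∃ t, (p * (-B0).charpoly).eval t ≠ 0 := by
    by_contra hcon
    push Not at hcon
    have : p * (-B0).charpoly = 0 := Polynomial.funext fun t => by rw [hcon]; simp
    rcases mul_eq_zero.mp this with h | h
    · exact hp0 h
    · exact (Matrix.charpoly_monic _).ne_zero h
  rw [Polynomial.eval_mul] at ht
  have ht1 := left_ne_zero_of_mul ht
  have ht2 := right_ne_zero_of_mul ht
  refine le_trans ?_ (hp t ht1)
  rw [Matrix.eval_charpoly] at ht2
  let bt := b + (C t : MvPowerSeries (Fin (d + 1)) k) • (1 : Matrix (Fin d) (Fin d) _)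
  have hFt : x ⬝ᵥ (a *ᵥ x) + C t * G =
      y ⬝ᵥ (bt *ᵥ y) + 2 * (c ⬝ᵥ y) * y0 + a' 0 0 * y0 ^ 2 := by
    rw [hF, hF2]
    simp only [bt, Matrix.add_mulVec, Matrix.smul_mulVec, Matrix.one_mulVec, dotProduct_add,
      dotProduct_smul, smul_eq_mul]
    have : G = y ⬝ᵥ y := by simp [G, dotProduct, sq]
    rw [this]
    ring
  rw [hFt]
  refine core y0 y (by rw [hcons, hY]) bt ?_ ?_ c (fun i => hcol _) _ (hcol 0)
  · intro i j
    simp only [bt, Matrix.add_apply, Matrix.smul_apply, b, Matrix.submatrix_apply]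
    rw [has, Matrix.one_apply, Matrix.one_apply]
    simp only [eq_comm]
  · convert ht2 using 2
    refine Matrix.ext fun i j => ?_
    simp only [bt, B0, Matrix.add_apply, Matrix.smul_apply, Matrix.map_apply, Matrix.one_apply,
      Matrix.scalar_apply, Matrix.sub_apply, Matrix.neg_apply, Matrix.diagonal_apply, map_add]
    split_ifs <;> simp [add_comm]

end HKA

/-- A non-regular hypersurface ring of dimension `d ≥ 2` in characteristic 3 is either
isomorphic to the `A₁` singularity `x_0² + ⋯ + x_d²`, or its (lim inf normalized)
Hilbert–Kunz function is bounded below by `e_HK(S_{3,d}) = 1 + (2/3)^{d−1}`. -/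
theorem hypersurface_dichotomy_char_three (k : Type*) [Field k] [IsAlgClosed k] [CharP k 3]
    (d : ℕ) (hd : 2 ≤ d) (F : MvPowerSeries (Fin (d + 1)) k)
    (hF2 : F ∈ (Ideal.span
      (Set.range (X : Fin (d + 1) → MvPowerSeries (Fin (d + 1)) k))) ^ 2)
    (hF0 : F ≠ 0) :
    Nonempty ((MvPowerSeries (Fin (d + 1)) k ⧸
        (Ideal.span {F} : Ideal (MvPowerSeries (Fin (d + 1)) k))) ≃+*
      (MvPowerSeries (Fin (d + 1)) k ⧸
        (Ideal.span {∑ i : Fin (d + 1),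
          (X i : MvPowerSeries (Fin (d + 1)) k) ^ 2} :
          Ideal (MvPowerSeries (Fin (d + 1)) k)))) ∨
    Filter.liminf (fun e : ℕ => (HKps k d 3 e F : ℝ) / 3 ^ (d * e)) Filter.atTop ≥
      1 + (2 / 3 : ℝ) ^ (d - 1) := by
  obtain ⟨a, ha, rfl⟩ := HKA.exists_quad F hF2
  by_cases hdet : (a.map constantCoeff).det = 0
  · right
    obtain ⟨m, rfl⟩ : ∃ m, d = m + 1 := ⟨d - 1, by omega⟩
    have h1 := (HKA.model (k := k) m).trans (HKA.degen a ha hdet)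
    set F := (fun i => (X i : MvPowerSeries (Fin (m + 1 + 1)) k)) ⬝ᵥ
      (a.mulVec (fun i => X i)) with hF
    obtain ⟨B, hB⟩ := HKA.hk_upper (m + 1) F hF0
    refine Filter.le_liminf_of_le ?_ ?_
    · refine Filter.IsBoundedUnder.isCoboundedUnder_ge ⟨(B : ℝ), ?_⟩
      rw [Filter.eventually_map]
      refine Filter.Eventually.of_forall fun e => ?_
      rw [HKA.HKps_eq]
      change ((HKA.hk (3 ^ e) F : ℕ) : ℝ) / 3 ^ ((m + 1) * e) ≤ (B : ℝ)
      rw [div_le_iff₀ (by positivity)]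
      have := hB (3 ^ e)
      rw [← pow_mul, mul_comm e] at this
      exact_mod_cast this
    · filter_upwards [Filter.eventually_ge_atTop 1] with e he
      obtain ⟨e, rfl⟩ : ∃ e', e = e' + 1 := ⟨e - 1, by omega⟩
      rw [HKA.HKps_eq, le_div_iff₀ (by positivity)]
      have h2 := HKA.hk_mono_pow (m + 1) e F
      have h3 : 3 ^ ((m + 1) * e) * (3 * (3 ^ m + 2 ^ m)) ≤ HKA.hk (3 ^ (e + 1)) F :=
        (Nat.mul_le_mul_left _ h1).trans h2
      have h4 : ((3 ^ ((m + 1) * e) * (3 * (3 ^ m + 2 ^ m)) : ℕ) : ℝ) ≤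
        (HKA.hk (3 ^ (e + 1)) F : ℝ) := by exact_mod_cast h3
      refine le_trans (le_of_eq ?_) h4
      have h5 : (m + 1) * (e + 1) = (m + 1) * e + m + 1 := by ring
      have h6 : m + 1 - 1 = m := rfl
      rw [h5, h6, div_pow]
      push_cast
      rw [pow_succ, pow_add]
      field_simp
  · left
    obtain ⟨φ, hφ⟩ := HKA.A1_case a ha hdet
    refine ⟨(Ideal.quotientEquiv _ _ φ.toRingEquiv ?_).symm⟩
    rw [Ideal.map_span, Set.image_singleton, ← hφ]
    rfl
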